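/- arXiv:2411.18131 — 5 statements merged into one kernel-verified Lean document; each statement's English description precedes it below -/
import Mathlib

section
/- Let B_n be the number of king permutations of length n that do not begin with the value 1 (with B_0 = 1, B_1 = 0), and let B(t) = Σ_{n≥0} B_n t^n. Then (1+t)·B(t) = A(t) as formal power series over ℚ; equivalently, B_n + B_{n−1} = A_n for every n ≥ 1. -/
/-- A permutation of `{0, …, n-1}` is a *king permutation* if consecutive entries
differ by more than 1 in absolute value. -/
def IsKing {n : ℕ} (σ : Equiv.Perm (Fin n)) : Prop :=
  ∀ i : Fin n, ∀ h : (i : ℕ) + 1 < n,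
    1 < |((σ ⟨(i : ℕ) + 1, h⟩ : ℕ) : ℤ) - ((σ i : ℕ) : ℤ)|

/-- `kingCount n = A_n`, the number of king permutations of length `n`. -/
noncomputable def kingCount (n : ℕ) : ℕ :=
  Nat.card {σ : Equiv.Perm (Fin n) // IsKing σ}

/-- `A(t) = Σ_{n≥0} A_n t^n` as a formal power series over `ℚ`. -/
noncomputable def kingA : PowerSeries ℚ :=
  PowerSeries.mk fun n => (kingCount n : ℚ)

/-- `Bcount n = B_n`, the number of king permutations of length `n` that do not
begin with the smallest value. -/
noncomputable def Bcount (n : ℕ) : ℕ :=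
  Nat.card {σ : Equiv.Perm (Fin n) // IsKing σ ∧ ∀ h : 0 < n, σ ⟨0, h⟩ ≠ ⟨0, h⟩}

/-- `B(t) = Σ_{n≥0} B_n t^n` as a formal power series over `ℚ`. -/
noncomputable def kingB : PowerSeries ℚ :=
  PowerSeries.mk fun n => (Bcount n : ℚ)

/-!
A king permutation beginning with its smallest value is obtained from a shorter permutation by
raising every value by one and prepending the minimum. The only adjacency this can create is
between the minimum and the next entry, and it is avoided exactly when the shorter permutation does
not itself begin with its minimum. Hence `A_n - B_n = B_{n-1}`.
-/

lemma one_add_X_mul_mk_eq_mk_iff {R : Type*} [Semiring R] {a b : ℕ → R} :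
    (1 + PowerSeries.X) * PowerSeries.mk b = PowerSeries.mk a ↔
      b 0 = a 0 ∧ ∀ n, b (n + 1) + b n = a (n + 1) := by
  rw [PowerSeries.ext_iff, ← Nat.and_forall_add_one]
  simp [add_mul, PowerSeries.coeff_succ_X_mul]

section PrependMin

open Equiv

variable {n : ℕ}

/-- The permutation of length `n + 1` whose word is the minimum followed by the word of `e` with
all values raised by one; it identifies the permutations of length `n` with those permutations of
length `n + 1` that begin with their minimum. -/
def prependMin (e : Perm (Fin n)) : Perm (Fin (n + 1)) :=
  Perm.decomposeFin.symm (0, e)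

@[simp]
lemma prependMin_apply_zero (e : Perm (Fin n)) : prependMin e 0 = 0 :=
  Perm.decomposeFin_symm_apply_zero 0 e

@[simp]
lemma prependMin_apply_succ (e : Perm (Fin n)) (i : Fin n) :
    prependMin e i.succ = (e i).succ := by
  simp [prependMin]

lemma prependMin_injective : Function.Injective (prependMin (n := n)) :=
  Perm.decomposeFin.symm.injective.comp (Prod.mk_right_injective 0)

lemma range_prependMin : Set.range (prependMin (n := n)) = {σ | σ 0 = 0} := by
  refine Set.Subset.antisymm (Set.range_subset_iff.2 prependMin_apply_zero) fun σ hσ => ?_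
  obtain ⟨⟨p, e⟩, rfl⟩ := Perm.decomposeFin.symm.surjective σ
  obtain rfl : p = 0 := (Perm.decomposeFin_symm_apply_zero p e).symm.trans hσ
  exact ⟨e, rfl⟩

lemma isKing_iff_forall_succ_castSucc {σ : Perm (Fin (n + 1))} :
    IsKing σ ↔ ∀ i : Fin n, 1 < |((σ i.succ : ℕ) : ℤ) - ((σ i.castSucc : ℕ) : ℤ)| :=
  ⟨fun h i => h i.castSucc i.succ.isLt, fun h i hi => h ⟨i, Nat.succ_lt_succ_iff.1 hi⟩⟩

lemma isKing_prependMin_iff {e : Perm (Fin n)} :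
    IsKing (prependMin e) ↔ IsKing e ∧ ∀ h : 0 < n, e ⟨0, h⟩ ≠ ⟨0, h⟩ := by
  cases n with
  | zero =>
    exact iff_of_true (isKing_iff_forall_succ_castSucc.2 fun i => i.elim0)
      ⟨fun i => i.elim0, fun h => (lt_irrefl 0 h).elim⟩
  | succ n =>
    have first_gap : 1 < |(((e 0).succ : ℕ) : ℤ) - ((0 : Fin (n + 2)) : ℕ)| ↔ e 0 ≠ 0 := by
      rw [Fin.val_succ, Fin.val_zero, Nat.cast_zero, sub_zero, Nat.abs_cast, Nat.one_lt_cast,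
        Nat.lt_add_left_iff_pos, Fin.val_pos_iff, Fin.pos_iff_ne_zero]
    have later_gap (i : Fin n) :
        (((e i.succ).succ : ℕ) : ℤ) - ((e i.castSucc).succ : ℕ) =
          ((e i.succ : ℕ) : ℤ) - (e i.castSucc : ℕ) := by
      simp only [Fin.val_succ, Nat.cast_succ, add_sub_add_right_eq_sub]
    have first_ne_min_iff : (∀ h : 0 < n + 1, e ⟨0, h⟩ ≠ ⟨0, h⟩) ↔ e 0 ≠ 0 :=
      forall_prop_of_true n.succ_pos
    simp only [isKing_iff_forall_succ_castSucc, Fin.forall_fin_succ (n := n), prependMin_apply_succ,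
      Fin.castSucc_zero, prependMin_apply_zero, Fin.castSucc_succ, first_gap, later_gap,
      first_ne_min_iff, and_comm]

lemma image_prependMin_setOf_isKing_and_ne :
    prependMin '' {e : Perm (Fin n) | IsKing e ∧ ∀ h : 0 < n, e ⟨0, h⟩ ≠ ⟨0, h⟩} =
      {σ | IsKing σ} ∩ {σ | σ 0 = 0} := by
  simp only [← isKing_prependMin_iff, ← range_prependMin]
  exact Set.image_preimage_eq_inter_range (t := {σ | IsKing σ})

end PrependMin

lemma bcount_succ_add_bcount (n : ℕ) : Bcount (n + 1) + Bcount n = kingCount (n + 1) := by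
  let kings : Set (Equiv.Perm (Fin (n + 1))) := {σ | IsKing σ}
  let minFirst : Set (Equiv.Perm (Fin (n + 1))) := {σ | σ 0 = 0}
  have card_not_minFirst : Bcount (n + 1) = (kings \ minFirst).ncard :=
    congrArg Set.ncard (Set.ext fun σ => and_congr_right' (forall_prop_of_true n.succ_pos))
  have card_minFirst : Bcount n = (kings ∩ minFirst).ncard := by
    rw [← image_prependMin_setOf_isKing_and_ne, Set.ncard_image_of_injective _ prependMin_injective]
    rfl
  rw [card_not_minFirst, card_minFirst, add_comm]
  exact Set.ncard_inter_add_ncard_sdiff_eq_ncard kings minFirst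

lemma bcount_zero_eq_kingCount_zero : Bcount 0 = kingCount 0 := by
  simp [Bcount, kingCount]

theorem statement_0 :
    (1 + PowerSeries.X) * kingB = kingA ∧
      ∀ n : ℕ, 1 ≤ n → Bcount n + Bcount (n - 1) = kingCount n := by
  refine ⟨one_add_X_mul_mk_eq_mk_iff.2 ⟨?_, fun n => ?_⟩, fun n hn => ?_⟩
  · exact congrArg Nat.cast bcount_zero_eq_kingCount_zero
  · exact_mod_cast bcount_succ_add_bcount n
  · simpa only [Nat.sub_add_cancel hn] using bcount_succ_add_bcount (n - 1)
end

section
/- Let sfp(σ) denote the number of strong fixed points of σ, and let A(t,u) = Σ_{n≥0} t^n Σ_{σ∈K_n} u^{sfp(σ)}, a formal power series in t with coefficients in ℚ[u]. Then (1 + t(1+u+ut) + t(1−u)·A(t))·A(t,u) = (1+ut)(1+t)·A(t), where A(t) is regarded as an element of ℚ[u][[t]] via the constant-polynomial embedding. -/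
/-- `A(t)` regarded as a power series over `ℚ[u]` (constant-polynomial coefficients). -/
noncomputable def kingAu : PowerSeries (Polynomial ℚ) :=
  PowerSeries.mk fun n => (kingCount n : Polynomial ℚ)

/-- `i` is a *strong fixed point* of `σ`: all earlier entries are smaller and all
later entries are larger. -/
def IsStrongFixedPoint {n : ℕ} (σ : Equiv.Perm (Fin n)) (i : Fin n) : Prop :=
  (∀ j : Fin n, j < i → σ j < σ i) ∧ (∀ j : Fin n, i < j → σ i < σ j)

/-- `sfp σ`, the number of strong fixed points of `σ`. -/
noncomputable def sfp {n : ℕ} (σ : Equiv.Perm (Fin n)) : ℕ :=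
  Nat.card {i : Fin n // IsStrongFixedPoint σ i}

-- `A(t,u) = Σ_{n≥0} t^n Σ_{σ∈K_n} u^{sfp(σ)}`, as a power series in `t`
-- with coefficients in `ℚ[u]`.
open Classical in
noncomputable def Atu : PowerSeries (Polynomial ℚ) :=
  PowerSeries.mk fun n =>
    ∑ σ : Equiv.Perm (Fin n),
      if IsKing σ then (Polynomial.X : Polynomial ℚ) ^ sfp σ else 0

/-- `u` viewed as a constant power series over `ℚ[u]`. -/
noncomputable def U : PowerSeries (Polynomial ℚ) :=
  PowerSeries.C (R := Polynomial ℚ) Polynomial.X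

/-!
A king permutation with a strong fixed point is cut just before its leftmost one: it is `α ⊕ β`,
where `α` has no strong fixed point and `β` begins with one. Strong fixed points add up over a
direct sum, and a direct sum of king permutations is king unless the last entry of `α` and the
first entry of `β` are both strong fixed points, which is impossible here. Let `G`, `F`, `S`, `T`
be the generating functions of all king permutations, of those without strong fixed points, of
those beginning with a strong fixed point, and of those not beginning with one. The cut gives
`G = F (1 + S)`, and deleting the first entry gives `S = u t T`, while `G = S + T`. Therefore
`G (1 + u t) = F (1 + u t (1 + G))`. As `F` does not involve `u`, it is eliminated between this
equation and its specialisation at `u = 1`, where `G = A(t)`.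
-/

open Equiv Finset

section Splitting

variable {n a b : ℕ}

theorem IsStrongFixedPoint.apply_eq {σ : Perm (Fin n)} {i : Fin n}
    (h : IsStrongFixedPoint σ i) : σ i = i := by
  have below : #(Iio i) ≤ #(Iio (σ i)) :=
    card_le_card_of_injOn σ (fun j hj => mem_coe.2 (mem_Iio.2 (h.1 j (by simpa using hj))))
      σ.injective.injOn
  have above : #(Ioi i) ≤ #(Ioi (σ i)) :=
    card_le_card_of_injOn σ (fun j hj => mem_coe.2 (mem_Ioi.2 (h.2 j (by simpa using hj))))
      σ.injective.injOn
  rw [Fin.card_Iio, Fin.card_Iio] at below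
  rw [Fin.card_Ioi, Fin.card_Ioi] at above
  omega

theorem isStrongFixedPoint_iff_of_isBot {σ : Perm (Fin n)} {i : Fin n} (hi : IsBot i) :
    IsStrongFixedPoint σ i ↔ σ i = i := by
  refine ⟨IsStrongFixedPoint.apply_eq, fun h => ⟨fun j hj => absurd hj (hi j).not_gt, ?_⟩⟩
  exact fun j hj => lt_of_le_of_ne (h.le.trans (hi _)) (σ.injective.ne hj.ne)

theorem isStrongFixedPoint_iff_of_isTop {σ : Perm (Fin n)} {i : Fin n} (hi : IsTop i) :
    IsStrongFixedPoint σ i ↔ σ i = i := by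
  refine ⟨IsStrongFixedPoint.apply_eq, fun h => ⟨?_, fun j hj => absurd hj (hi j).not_gt⟩⟩
  exact fun j hj => lt_of_le_of_ne ((hi _).trans h.ge) (σ.injective.ne hj.ne)

theorem isKing_iff_forall_succ {σ : Perm (Fin n)} :
    IsKing σ ↔ ∀ i j : Fin n, (i : ℕ) + 1 = j →
      (σ i : ℕ) + 1 ≠ σ j ∧ (σ j : ℕ) + 1 ≠ σ i := by
  constructor
  · intro h i j hij
    have gap := h i (hij ▸ j.2)
    rw [show (⟨(i : ℕ) + 1, hij ▸ j.2⟩ : Fin n) = j from Fin.ext hij, lt_abs] at gap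
    omega
  · intro h i hi
    have hne : σ i ≠ σ ⟨(i : ℕ) + 1, hi⟩ := σ.injective.ne (Fin.ne_of_lt (Nat.lt_succ_self _))
    have := h i ⟨(i : ℕ) + 1, hi⟩ rfl
    rw [lt_abs]
    omega

/-- The direct sum `α ⊕ β` of permutations: the word of `α` followed by the word of `β` with all
its entries raised by the length of `α`. -/
def permDirectSum (α : Perm (Fin a)) (β : Perm (Fin b)) : Perm (Fin (a + b)) :=
  finSumFinEquiv.permCongr (Perm.sumCongr α β)

@[simp]
theorem permDirectSum_castAdd (α : Perm (Fin a)) (β : Perm (Fin b)) (i : Fin a) :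
    permDirectSum α β (Fin.castAdd b i) = Fin.castAdd b (α i) := by
  simp [permDirectSum]

@[simp]
theorem permDirectSum_natAdd (α : Perm (Fin a)) (β : Perm (Fin b)) (i : Fin b) :
    permDirectSum α β (Fin.natAdd a i) = Fin.natAdd a (β i) := by
  simp [permDirectSum]

theorem permDirectSum_injective :
    Function.Injective fun p : Perm (Fin a) × Perm (Fin b) => permDirectSum p.1 p.2 :=
  finSumFinEquiv.permCongr.injective.comp Perm.sumCongrHom_injective

theorem exists_permDirectSum_eq {σ : Perm (Fin (a + b))}
    (h : ∀ i : Fin a, (σ (Fin.castAdd b i) : ℕ) < a) :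
    ∃ (α : Perm (Fin a)) (β : Perm (Fin b)), permDirectSum α β = σ := by
  have maps : Set.MapsTo (finSumFinEquiv.symm.permCongr σ)
      (Set.range Sum.inl) (Set.range Sum.inl) := by
    rintro _ ⟨i, rfl⟩
    refine ⟨⟨_, h i⟩, ?_⟩
    rw [permCongr_apply, symm_symm, finSumFinEquiv_apply_left, eq_symm_apply,
      finSumFinEquiv_apply_left]
    rfl
  obtain ⟨⟨α, β⟩, hαβ⟩ := Perm.mem_sumCongrHom_range_of_perm_mapsTo_inl maps
  exact ⟨α, β, (finSumFinEquiv.permCongr.symm_apply_eq.1 hαβ.symm).symm⟩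

/-- The positions, counted from `0`, of the strong fixed points of `σ`; as a set of natural
numbers, so that permutations of different lengths can be compared. -/
def sfpSet (σ : Perm (Fin n)) : Set ℕ :=
  Fin.val '' {i | IsStrongFixedPoint σ i}

theorem lt_of_mem_sfpSet {σ : Perm (Fin n)} {k : ℕ} (hk : k ∈ sfpSet σ) : k < n := by
  obtain ⟨i, -, rfl⟩ := hk
  exact i.2

theorem zero_mem_sfpSet_iff {σ : Perm (Fin n)} :
    0 ∈ sfpSet σ ↔ ∃ i : Fin n, (i : ℕ) = 0 ∧ (σ i : ℕ) = 0 := by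
  have bot {i : Fin n} (hi : (i : ℕ) = 0) : IsBot i := fun j => Fin.le_def.2 (by omega)
  constructor
  · rintro ⟨i, hi, h0⟩
    exact ⟨i, h0, by rw [hi.apply_eq, h0]⟩
  · rintro ⟨i, h0, hσ⟩
    exact ⟨i, (isStrongFixedPoint_iff_of_isBot (bot h0)).2 (Fin.ext (hσ.trans h0.symm)), h0⟩

theorem exists_mem_sfpSet_add_one_eq_iff {σ : Perm (Fin n)} :
    (∃ k ∈ sfpSet σ, k + 1 = n) ↔ ∃ i : Fin n, (i : ℕ) + 1 = n ∧ (σ i : ℕ) + 1 = n := by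
  have top {i : Fin n} (hi : (i : ℕ) + 1 = n) : IsTop i := fun j => Fin.le_def.2 (by omega)
  constructor
  · rintro ⟨_, ⟨i, hi, rfl⟩, hn⟩
    exact ⟨i, hn, by rw [hi.apply_eq, hn]⟩
  · rintro ⟨i, hn, hσ⟩
    exact ⟨i, ⟨i, (isStrongFixedPoint_iff_of_isTop (top hn)).2 (Fin.ext (by omega)), rfl⟩, hn⟩

theorem sfpSet_perm_fin_one (σ : Perm (Fin 1)) : sfpSet σ = {0} :=
  Set.eq_singleton_iff_unique_mem.2 ⟨zero_mem_sfpSet_iff.2 ⟨0, rfl, by omega⟩,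
    fun _ hk => Nat.lt_one_iff.1 (lt_of_mem_sfpSet hk)⟩

theorem apply_castAdd_lt_of_mem_sfpSet {σ : Perm (Fin (a + b))} (ha : a ∈ sfpSet σ) (i : Fin a) :
    (σ (Fin.castAdd b i) : ℕ) < a := by
  obtain ⟨j, hj, hja⟩ := ha
  have hlt : σ (Fin.castAdd b i) < σ j := hj.1 _ (Fin.lt_def.2 (hja.symm ▸ i.2))
  rwa [hj.apply_eq, Fin.lt_def, hja] at hlt

theorem sfp_eq_ncard_sfpSet (σ : Perm (Fin n)) : sfp σ = (sfpSet σ).ncard :=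
  (Set.ncard_image_of_injective _ Fin.val_injective).symm

theorem isStrongFixedPoint_permDirectSum_castAdd {α : Perm (Fin a)} {β : Perm (Fin b)}
    {i : Fin a} :
    IsStrongFixedPoint (permDirectSum α β) (Fin.castAdd b i) ↔ IsStrongFixedPoint α i := by
  simp only [IsStrongFixedPoint, Fin.forall_fin_add, permDirectSum_castAdd, permDirectSum_natAdd,
    Fin.lt_def, Fin.val_castAdd, Fin.val_natAdd]
  grind

theorem isStrongFixedPoint_permDirectSum_natAdd {α : Perm (Fin a)} {β : Perm (Fin b)}
    {i : Fin b} :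
    IsStrongFixedPoint (permDirectSum α β) (Fin.natAdd a i) ↔ IsStrongFixedPoint β i := by
  simp only [IsStrongFixedPoint, Fin.forall_fin_add, permDirectSum_castAdd, permDirectSum_natAdd,
    Fin.lt_def, Fin.val_castAdd, Fin.val_natAdd]
  grind

theorem sfpSet_permDirectSum (α : Perm (Fin a)) (β : Perm (Fin b)) :
    sfpSet (permDirectSum α β) = sfpSet α ∪ (a + ·) '' sfpSet β := by
  refine Set.Subset.antisymm ?_ (Set.union_subset ?_ ?_)
  · rintro _ ⟨i, hi, rfl⟩
    induction i using Fin.addCases with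
    | left i => exact .inl ⟨i, isStrongFixedPoint_permDirectSum_castAdd.1 hi, rfl⟩
    | right i => exact .inr ⟨i, ⟨i, isStrongFixedPoint_permDirectSum_natAdd.1 hi, rfl⟩, rfl⟩
  · rintro _ ⟨i, hi, rfl⟩
    exact ⟨Fin.castAdd b i, isStrongFixedPoint_permDirectSum_castAdd.2 hi, rfl⟩
  · rintro _ ⟨_, ⟨i, hi, rfl⟩, rfl⟩
    exact ⟨Fin.natAdd a i, isStrongFixedPoint_permDirectSum_natAdd.2 hi, rfl⟩

theorem sfp_permDirectSum (α : Perm (Fin a)) (β : Perm (Fin b)) :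
    sfp (permDirectSum α β) = sfp α + sfp β := by
  have disj : Disjoint (sfpSet α) ((a + ·) '' sfpSet β) := by
    rw [Set.disjoint_left]
    rintro _ hk ⟨l, -, rfl⟩
    exact (lt_of_mem_sfpSet hk).not_ge (Nat.le_add_right a l)
  simp only [sfp_eq_ncard_sfpSet, sfpSet_permDirectSum]
  rw [Set.ncard_union_eq disj (Set.toFinite _ |>.image _) ((Set.toFinite _ |>.image _).image _),
    Set.ncard_image_of_injective _ (add_right_injective a)]

theorem isLeast_sfpSet_permDirectSum {α : Perm (Fin a)} {β : Perm (Fin b)} :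
    IsLeast (sfpSet (permDirectSum α β)) a ↔ sfpSet α = ∅ ∧ 0 ∈ sfpSet β := by
  rw [sfpSet_permDirectSum]
  constructor
  · rintro ⟨ha | ⟨k, hk, hka⟩, least⟩
    · exact absurd (lt_of_mem_sfpSet ha) (lt_irrefl a)
    · obtain rfl : k = 0 := by simpa using hka
      refine ⟨Set.eq_empty_of_forall_notMem fun k hkα => ?_, hk⟩
      exact (lt_of_mem_sfpSet hkα).not_ge (least (.inl hkα))
  · rintro ⟨empty, zero⟩
    rw [empty, Set.empty_union]
    refine ⟨⟨0, zero, rfl⟩, ?_⟩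
    rintro _ ⟨k, -, rfl⟩
    exact Nat.le_add_right a k

theorem isKing_permDirectSum {α : Perm (Fin a)} {β : Perm (Fin b)} :
    IsKing (permDirectSum α β) ↔
      IsKing α ∧ IsKing β ∧ ¬((∃ k ∈ sfpSet α, k + 1 = a) ∧ 0 ∈ sfpSet β) := by
  rw [exists_mem_sfpSet_add_one_eq_iff, zero_mem_sfpSet_iff]
  simp only [isKing_iff_forall_succ, Fin.forall_fin_add, permDirectSum_castAdd,
    permDirectSum_natAdd, Fin.val_castAdd, Fin.val_natAdd]
  constructor
  · intro h
    refine ⟨fun i => (h.1 i).1, fun i j hij => ?_, ?_⟩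
    · have := (h.2 i).2 j (by omega)
      omega
    · rintro ⟨⟨i, hi, hαi⟩, j, hj, hβj⟩
      have := (h.1 i).2 j (by omega)
      omega
  · rintro ⟨hα, hβ, junction⟩
    refine ⟨fun i => ⟨hα i, fun j hij => ?_⟩, fun i => ⟨fun j hij => ?_, fun j hij => ?_⟩⟩
    · have : ¬((α i : ℕ) + 1 = a ∧ (β j : ℕ) = 0) := fun h =>
        junction ⟨⟨i, by omega, h.1⟩, j, by omega, h.2⟩
      omega
    · omega
    · have := hβ i j (by omega)
      omega

end Splitting

open PowerSeries

section Enumeration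

variable {R : Type*} [CommSemiring R] {n a b : ℕ}

open Classical in
/-- The sum `∑ u ^ sfp σ` over the permutations `σ` of length `n` that satisfy `P`. -/
noncomputable def sfpEnumerator (P : Perm (Fin n) → Prop) (u : R) : R :=
  ∑ σ with P σ, u ^ sfp σ

theorem sfpEnumerator_eq_mul {P : Perm (Fin (a + b)) → Prop} {Q : Perm (Fin a) → Prop}
    {Q' : Perm (Fin b) → Prop}
    (hP : ∀ σ, P σ → ∀ i : Fin a, (σ (Fin.castAdd b i) : ℕ) < a)
    (hPQ : ∀ α β, P (permDirectSum α β) ↔ Q α ∧ Q' β) (u : R) :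
    sfpEnumerator P u = sfpEnumerator Q u * sfpEnumerator Q' u := by
  classical
  simp only [sfpEnumerator, sum_filter]
  rw [sum_mul_sum, ← sum_product', univ_product_univ]
  refine (Fintype.sum_of_injective _ permDirectSum_injective _ _ (fun σ hσ => ?_) fun p => ?_).symm
  · refine if_neg fun h => hσ ?_
    obtain ⟨α, β, rfl⟩ := exists_permDirectSum_eq (hP σ h)
    exact ⟨(α, β), rfl⟩
  · simp only [hPQ, sfp_permDirectSum, pow_add, ite_zero_mul_ite_zero]

theorem sfpEnumerator_eq_add (P Q : Perm (Fin n) → Prop) (u : R) :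
    sfpEnumerator P u =
      sfpEnumerator (fun σ => P σ ∧ Q σ) u + sfpEnumerator (fun σ => P σ ∧ ¬Q σ) u := by
  classical
  simp only [sfpEnumerator, ← filter_filter, sum_filter_add_sum_filter_not]

theorem sfpEnumerator_eq_sum_isLeast (P : Perm (Fin n) → Prop) (u : R) :
    sfpEnumerator (fun σ => P σ ∧ sfpSet σ ≠ ∅) u =
      ∑ p ∈ antidiagonal n, sfpEnumerator (fun σ => P σ ∧ IsLeast (sfpSet σ) p.1) u := by
  classical
  let first (σ : Perm (Fin n)) : ℕ × ℕ := (sInf (sfpSet σ), n - sInf (sfpSet σ))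
  have first_mem {σ} (hσ : sfpSet σ ≠ ∅) : first σ ∈ antidiagonal n :=
    mem_antidiagonal.2 <| Nat.add_sub_cancel'
      (lt_of_mem_sfpSet (csInf_mem (Set.nonempty_iff_ne_empty.2 hσ))).le
  rw [sfpEnumerator, ← sum_fiberwise_of_maps_to (g := first) (t := antidiagonal n)]
  swap
  · simp only [mem_filter, mem_univ, true_and]
    exact fun σ hσ => first_mem hσ.2
  refine sum_congr rfl fun p hp => ?_
  rw [sfpEnumerator, filter_filter]
  refine sum_congr (Finset.ext fun σ => ?_) fun _ _ => rfl
  rw [HasAntidiagonal.mem_antidiagonal] at hp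
  have first_eq : first σ = p ↔ sInf (sfpSet σ) = p.1 := by
    rw [Prod.ext_iff]
    exact ⟨And.left, fun h => ⟨h, by simp only [first]; omega⟩⟩
  have isLeast_iff : IsLeast (sfpSet σ) p.1 ↔ sfpSet σ ≠ ∅ ∧ sInf (sfpSet σ) = p.1 :=
    ⟨fun h => ⟨h.nonempty.ne_empty, h.csInf_eq⟩,
      fun h => h.2 ▸ isLeast_csInf (Set.nonempty_iff_ne_empty.2 h.1)⟩
  simp only [mem_filter, mem_univ, true_and, first_eq, isLeast_iff, and_assoc]

theorem sfpEnumerator_isKing_isLeast (u : R) :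
    sfpEnumerator (fun σ : Perm (Fin (a + b)) => IsKing σ ∧ IsLeast (sfpSet σ) a) u =
      sfpEnumerator (fun σ : Perm (Fin a) => IsKing σ ∧ sfpSet σ = ∅) u *
        sfpEnumerator (fun σ : Perm (Fin b) => IsKing σ ∧ 0 ∈ sfpSet σ) u := by
  refine sfpEnumerator_eq_mul (fun σ hσ => apply_castAdd_lt_of_mem_sfpSet hσ.2.1)
    (fun α β => ?_) u
  rw [isKing_permDirectSum, isLeast_sfpSet_permDirectSum]
  constructor
  · rintro ⟨⟨hα, hβ, -⟩, empty, zero⟩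
    exact ⟨⟨hα, empty⟩, hβ, zero⟩
  · rintro ⟨⟨hα, empty⟩, hβ, zero⟩
    refine ⟨⟨hα, hβ, ?_⟩, empty, zero⟩
    rintro ⟨⟨k, hk, -⟩, -⟩
    exact Set.notMem_empty k (empty ▸ hk)

theorem sfpEnumerator_perm_fin_one (u : R) :
    sfpEnumerator (fun _ : Perm (Fin 1) => True) u = u := by
  simp [sfpEnumerator, sfp_eq_ncard_sfpSet, sfpSet_perm_fin_one]

theorem sfpEnumerator_isKing_zero_mem (u : R) :
    sfpEnumerator (fun σ : Perm (Fin (1 + n)) => IsKing σ ∧ 0 ∈ sfpSet σ) u =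
      u * sfpEnumerator (fun σ : Perm (Fin n) => IsKing σ ∧ 0 ∉ sfpSet σ) u := by
  rw [sfpEnumerator_eq_mul (Q := fun _ => True)
    (Q' := fun σ : Perm (Fin n) => IsKing σ ∧ 0 ∉ sfpSet σ), sfpEnumerator_perm_fin_one]
  · rintro σ ⟨-, h0⟩ i
    obtain ⟨j, h0, hj⟩ := zero_mem_sfpSet_iff.1 h0
    have : Fin.castAdd n i = j := Fin.ext (by rw [Fin.val_castAdd, h0]; omega)
    rw [this, hj]
    exact one_pos
  · intro α β
    have kingα : IsKing α := fun i hi => by omega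
    simp [isKing_permDirectSum, sfpSet_permDirectSum, kingα, sfpSet_perm_fin_one]

/-- The power series `∑ tⁿ u ^ sfp σ` over the permutations `σ` of all lengths `n` that
satisfy `P`. -/
noncomputable def sfpSeries (P : ∀ {n : ℕ}, Perm (Fin n) → Prop) (u : R) : R⟦X⟧ :=
  PowerSeries.mk fun n => sfpEnumerator (n := n) P u

theorem sfpSeries_isKing_eq_add (u : R) :
    sfpSeries IsKing u =
      sfpSeries (fun σ => IsKing σ ∧ 0 ∈ sfpSet σ) u +
        sfpSeries (fun σ => IsKing σ ∧ 0 ∉ sfpSet σ) u := by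
  ext n
  simp only [sfpSeries, map_add, coeff_mk]
  exact sfpEnumerator_eq_add _ _ u

theorem sfpSeries_isKing_zero_mem (u : R) :
    sfpSeries (fun σ => IsKing σ ∧ 0 ∈ sfpSet σ) u =
      X * (C u * sfpSeries (fun σ => IsKing σ ∧ 0 ∉ sfpSet σ) u) := by
  ext n
  cases n with
  | zero =>
    have zero_notMem (σ : Perm (Fin 0)) : 0 ∉ sfpSet σ := fun h => (lt_of_mem_sfpSet h).false
    simp [sfpSeries, sfpEnumerator, zero_notMem]
  | succ n =>
    rw [coeff_succ_X_mul, coeff_C_mul, sfpSeries, sfpSeries, coeff_mk, coeff_mk, add_comm n 1,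
      sfpEnumerator_isKing_zero_mem]

theorem sfpSeries_isKing_eq_mul (u : R) :
    sfpSeries IsKing u = sfpSeries (fun σ => IsKing σ ∧ sfpSet σ = ∅) u *
      (1 + sfpSeries (fun σ => IsKing σ ∧ 0 ∈ sfpSet σ) u) := by
  ext n
  rw [mul_one_add, map_add, coeff_mul]
  simp only [sfpSeries, coeff_mk]
  rw [sfpEnumerator_eq_add IsKing (fun σ => sfpSet σ = ∅) u, sfpEnumerator_eq_sum_isLeast]
  congr 1
  refine sum_congr rfl fun ⟨a, b⟩ hab => ?_
  obtain rfl : a + b = n := mem_antidiagonal.1 hab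
  exact sfpEnumerator_isKing_isLeast u

theorem sfpSeries_sfpSet_eq_empty (P : ∀ {n : ℕ}, Perm (Fin n) → Prop) (u v : R) :
    sfpSeries (fun σ => P σ ∧ sfpSet σ = ∅) u = sfpSeries (fun σ => P σ ∧ sfpSet σ = ∅) v := by
  ext n
  simp only [sfpSeries, coeff_mk, sfpEnumerator]
  refine sum_congr rfl fun σ hσ => ?_
  simp only [mem_filter, mem_univ, true_and] at hσ
  rw [sfp_eq_ncard_sfpSet, hσ.2, Set.ncard_empty, pow_zero, pow_zero]

theorem sfpSeries_isKing_mul (u : R) :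
    sfpSeries IsKing u * (1 + X * C u) =
      sfpSeries (fun σ => IsKing σ ∧ sfpSet σ = ∅) u *
        (1 + X * C u * (1 + sfpSeries IsKing u)) := by
  set G : R⟦X⟧ := sfpSeries IsKing u
  set F : R⟦X⟧ := sfpSeries (fun σ => IsKing σ ∧ sfpSet σ = ∅) u
  set S : R⟦X⟧ := sfpSeries (fun σ => IsKing σ ∧ 0 ∈ sfpSet σ) u
  set T : R⟦X⟧ := sfpSeries (fun σ => IsKing σ ∧ 0 ∉ sfpSet σ) u
  have hS : S * (1 + X * C u) = X * C u * G := by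
    calc S * (1 + X * C u) = S + X * C u * S := by ring
      _ = X * (C u * T) + X * C u * S := congrArg (· + X * C u * S) (sfpSeries_isKing_zero_mem u)
      _ = X * C u * (S + T) := by ring
      _ = X * C u * G := congrArg _ (sfpSeries_isKing_eq_add u).symm
  calc G * (1 + X * C u) = F * (1 + S) * (1 + X * C u) :=
        congrArg (· * (1 + X * C u)) (sfpSeries_isKing_eq_mul u)
    _ = F * (1 + X * C u + S * (1 + X * C u)) := by ring
    _ = F * (1 + X * C u * (1 + G)) := by rw [hS]; ring

theorem sfpSeries_isKing_symm (u v : R) :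
    sfpSeries IsKing u * (1 + X * C u) * (1 + X * C v * (1 + sfpSeries IsKing v)) =
      sfpSeries IsKing v * (1 + X * C v) * (1 + X * C u * (1 + sfpSeries IsKing u)) := by
  rw [sfpSeries_isKing_mul u, sfpSeries_isKing_mul v, sfpSeries_sfpSet_eq_empty IsKing u v]
  ring

theorem sfpSeries_isKing_one :
    sfpSeries IsKing (1 : R) = PowerSeries.mk fun n => (kingCount n : R) := by
  classical
  ext n
  simp [sfpSeries, sfpEnumerator, kingCount, Nat.card_eq_fintype_card, Fintype.card_subtype]

theorem Atu_eq_sfpSeries : Atu = sfpSeries IsKing (Polynomial.X : Polynomial ℚ) := by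
  simp only [Atu, sfpSeries, sfpEnumerator, sum_filter]

end Enumeration

theorem statement_4_general {R : Type*} [CommRing R] (u : R) :
    (1 + X * (1 + C u + C u * X) + X * (1 - C u) * PowerSeries.mk fun n => (kingCount n : R)) *
        sfpSeries IsKing u =
      (1 + C u * X) * (1 + X) * PowerSeries.mk fun n => (kingCount n : R) := by
  have symm := sfpSeries_isKing_symm u 1
  rw [map_one, mul_one, sfpSeries_isKing_one] at symm
  linear_combination symm

theorem statement_4 :
    (1 + PowerSeries.X * (1 + U + U * PowerSeries.X)
        + PowerSeries.X * (1 - U) * kingAu) * Atu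
      = (1 + U * PowerSeries.X) * (1 + PowerSeries.X) * kingAu := by
  rw [Atu_eq_sfpSeries]
  exact statement_4_general Polynomial.X
end

section
/- For every n ≥ 2, the number of king permutations σ of length n with σ_1 < σ_n equals the number with σ_1 > σ_n, and each equals A_n/2. Consequently, exactly A_n/2 king permutations of length n avoid the mesh pattern Nr. 10 and exactly A_n/2 contain exactly one occurrence of it, where an occurrence of pattern Nr. 10 in σ is a pair of indices i < j with σ_i < σ_j such that there is no position before i and no position after j (forcing i = 1 and j = n). -/
/-- An occurrence of the mesh pattern Nr. 10 in `σ`: positions `i < j` with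
`σ i < σ j`, no position before `i`, and no position after `j`. -/
def OccTen {n : ℕ} (σ : Equiv.Perm (Fin n)) (i j : Fin n) : Prop :=
  i < j ∧ σ i < σ j ∧ (∀ k : Fin n, ¬ k < i) ∧ (∀ k : Fin n, ¬ j < k)

/-- The number of occurrences of the mesh pattern Nr. 10 in `σ`. -/
noncomputable def occTen {n : ℕ} (σ : Equiv.Perm (Fin n)) : ℕ :=
  Nat.card {p : Fin n × Fin n // OccTen σ p.1 p.2}

/-!
The complement `σ ↦ rev ∘ σ` replaces each entry of a permutation by its mirror image. It preserves
distances between entries, hence the king property, and reverses every comparison `σ i < σ j` with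
`i ≠ j`; so it pairs up the king permutations with `σ i < σ j` and those with `σ j < σ i`. The two
shaded borders of pattern Nr. 10 pin an occurrence to the first and last positions, so the number of
occurrences is the indicator of `σ 0 < σ (Fin.last m)`.
-/

open Equiv

theorem two_mul_card_and_eq_card {X : Type*} {P Q : X → Prop} (e : Perm X)
    (hP : ∀ x, P (e x) ↔ P x) (hQ : ∀ x, Q (e x) ↔ ¬ Q x) :
    2 * Nat.card {x // P x ∧ Q x} = Nat.card {x // P x} := by
  classical
  let swapQ : {x // P x ∧ ¬ Q x} ≃ {x // P x ∧ Q x} :=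
    e.subtypeEquiv fun x => by rw [hP, hQ]
  let split : {x // P x} ≃ {x // P x ∧ Q x} ⊕ {x // P x ∧ ¬ Q x} :=
    (sumCompl fun x : {x // P x} => Q x).symm.trans <|
      sumCongr (subtypeSubtypeEquivSubtypeInter P Q)
        (subtypeSubtypeEquivSubtypeInter P fun x => ¬ Q x)
  let double : {x // P x} ≃ Bool × {x // P x ∧ Q x} :=
    split.trans <| (sumCongr (.refl _) swapQ).trans (boolProdEquivSum _).symm
  rw [Nat.card_congr double, Nat.card_prod, Nat.card_eq_fintype_card (α := Bool), Fintype.card_bool]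

section Complement

variable {n : ℕ}

theorem intCast_rev_sub_intCast_rev (a b : Fin n) :
    ((a.rev : ℕ) : ℤ) - ((b.rev : ℕ) : ℤ) = ((b : ℕ) : ℤ) - ((a : ℕ) : ℤ) := by
  simp only [Fin.val_rev]
  omega

theorem isKing_revPerm_mul (σ : Perm (Fin n)) : IsKing (Fin.revPerm * σ) ↔ IsKing σ := by
  simp only [IsKing, Perm.mul_apply, Fin.revPerm_apply, intCast_rev_sub_intCast_rev, abs_sub_comm]

theorem revPerm_mul_apply_lt_iff_not_lt (σ : Perm (Fin n)) {i j : Fin n} (hij : i ≠ j) :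
    (Fin.revPerm * σ : Perm (Fin n)) i < (Fin.revPerm * σ : Perm (Fin n)) j ↔ ¬ σ i < σ j := by
  rw [Perm.mul_apply, Perm.mul_apply, Fin.revPerm_apply, Fin.revPerm_apply, Fin.rev_lt_rev,
    not_lt, (σ.injective.ne hij.symm).le_iff_lt]

theorem two_mul_card_isKing_and_apply_lt_apply {i j : Fin n} (hij : i ≠ j) :
    2 * Nat.card {σ : Perm (Fin n) // IsKing σ ∧ σ i < σ j} = kingCount n :=
  two_mul_card_and_eq_card (Equiv.mulLeft Fin.revPerm) isKing_revPerm_mul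
    fun σ => revPerm_mul_apply_lt_iff_not_lt σ hij

end Complement

section Occurrences

variable {m : ℕ}

theorem occTen_iff_eq_zero_and_eq_last (σ : Perm (Fin (m + 1))) (i j : Fin (m + 1)) :
    OccTen σ i j ↔ (i = 0 ∧ j = Fin.last m) ∧ σ 0 < σ (Fin.last m) := by
  constructor
  · rintro ⟨-, hlt, hfirst, hlast⟩
    obtain rfl : i = 0 := Fin.le_zero_iff.mp (not_lt.mp (hfirst 0))
    obtain rfl : j = Fin.last m := Fin.last_le_iff.mp (not_lt.mp (hlast (Fin.last m)))
    exact ⟨⟨rfl, rfl⟩, hlt⟩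
  · rintro ⟨⟨rfl, rfl⟩, hlt⟩
    have hne : Fin.last m ≠ 0 := fun h => hlt.ne' (congrArg σ h)
    exact ⟨Fin.pos_of_ne_zero hne, hlt, fun k => Fin.not_lt_zero k,
      fun k => (Fin.le_last k).not_gt⟩

theorem occTen_eq_ite (σ : Perm (Fin (m + 1))) :
    occTen σ = if σ 0 < σ (Fin.last m) then 1 else 0 := by
  simp only [occTen, occTen_iff_eq_zero_and_eq_last, ← Prod.mk_inj]
  split_ifs with hlt <;> simp [hlt]

theorem occTen_eq_one_iff (σ : Perm (Fin (m + 1))) :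
    occTen σ = 1 ↔ σ 0 < σ (Fin.last m) := by
  simp [occTen_eq_ite]

theorem occTen_eq_zero_iff (σ : Perm (Fin (m + 1))) (last_ne : Fin.last m ≠ 0) :
    occTen σ = 0 ↔ σ (Fin.last m) < σ 0 := by
  simp [occTen_eq_ite, (σ.injective.ne last_ne).le_iff_lt]

end Occurrences

theorem statement_6 (n : ℕ) (hn : 2 ≤ n) :
    Nat.card {σ : Equiv.Perm (Fin n) //
        IsKing σ ∧ σ ⟨0, by omega⟩ < σ ⟨n - 1, by omega⟩}
      = Nat.card {σ : Equiv.Perm (Fin n) //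
          IsKing σ ∧ σ ⟨n - 1, by omega⟩ < σ ⟨0, by omega⟩} ∧
    2 * Nat.card {σ : Equiv.Perm (Fin n) //
        IsKing σ ∧ σ ⟨0, by omega⟩ < σ ⟨n - 1, by omega⟩} = kingCount n ∧
    2 * Nat.card {σ : Equiv.Perm (Fin n) // IsKing σ ∧ occTen σ = 0}
      = kingCount n ∧
    2 * Nat.card {σ : Equiv.Perm (Fin n) // IsKing σ ∧ occTen σ = 1}
      = kingCount n := by
  obtain ⟨m, rfl⟩ := Nat.exists_eq_add_of_le' hn
  have last_ne : Fin.last (m + 1) ≠ 0 := Fin.last_pos.ne'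
  have ascending := two_mul_card_isKing_and_apply_lt_apply last_ne.symm
  have descending := two_mul_card_isKing_and_apply_lt_apply last_ne
  refine ⟨Nat.mul_left_cancel two_pos (ascending.trans descending.symm), ascending, ?_, ?_⟩
  · simpa only [occTen_eq_zero_iff _ last_ne] using descending
  · simpa only [occTen_eq_one_iff] using ascending
end

section
/- Let occ(σ) be the number of occurrences in σ of the mesh pattern Nr. 12, where an occurrence is a pair of indices i < j with σ_i < σ_j such that i = 1 and no index k > i satisfies σ_k < σ_i (equivalently, σ_1 = 1 and j is any index with 1 < j ≤ n). Then for every n ≥ 1, Σ_{σ∈K_n} u^{occ(σ)} = B_n + u^{n−1}·B_{n−1} in ℚ[u]. In particular, a king permutation of length n ≥ 2 has exactly n−1 occurrences of this pattern if it begins with 1 and none otherwise, and the number beginning with 1 equals B_{n−1}. -/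
/-- An occurrence of the mesh pattern Nr. 12 in `σ`: positions `i < j` with
`σ i < σ j`, such that `i` is the first position and no later position holds a
value smaller than `σ i`. -/
def OccTwelve {n : ℕ} (σ : Equiv.Perm (Fin n)) (i j : Fin n) : Prop :=
  i < j ∧ σ i < σ j ∧ (∀ k : Fin n, ¬ k < i) ∧ (∀ k : Fin n, i < k → σ i < σ k)

/-- The number of occurrences of the mesh pattern Nr. 12 in `σ`. -/
noncomputable def occTwelve {n : ℕ} (σ : Equiv.Perm (Fin n)) : ℕ :=
  Nat.card {p : Fin n × Fin n // OccTwelve σ p.1 p.2}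

/-!
Since the first entry of an occurrence must be the first letter and lie below every later one, it
is the smallest value, and then every later position completes an occurrence. Hence a permutation
contributes `u ^ (n - 1)` or `1` according to whether it starts with the smallest value. Deleting an
initial smallest value leaves a king permutation which does not itself start with its smallest
value, and this operation is invertible.
-/

section Occurrences

variable {n : ℕ} (σ : Equiv.Perm (Fin (n + 1)))

theorem occTwelve_iff {i j : Fin (n + 1)} : OccTwelve σ i j ↔ i = 0 ∧ j ≠ 0 ∧ σ 0 = 0 := by
  constructor
  · rintro ⟨hij, -, hfirst, hmin⟩
    obtain rfl : i = 0 := Fin.le_zero_iff.mp (not_lt.mp (hfirst 0))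
    refine ⟨rfl, hij.ne', ?_⟩
    by_contra h
    have hpos : 0 < σ.symm 0 :=
      Fin.pos_of_ne_zero fun h' => h ((Equiv.symm_apply_eq σ).mp h').symm
    exact Fin.not_lt_zero _ (by simpa only [Equiv.apply_symm_apply] using hmin _ hpos)
  · rintro ⟨rfl, hj, h⟩
    have hmin (k : Fin (n + 1)) (hk : 0 < k) : σ 0 < σ k :=
      h.symm ▸ Fin.pos_of_ne_zero fun hσk => hk.ne' (σ.injective (hσk.trans h.symm))
    have hj := Fin.pos_of_ne_zero hj
    exact ⟨hj, hmin j hj, Fin.not_lt_zero, hmin⟩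

theorem occTwelve_eq_ite : occTwelve σ = if σ 0 = 0 then n else 0 := by
  simp only [occTwelve, occTwelve_iff]
  split_ifs with h
  · have hprod : {p : Fin (n + 1) × Fin (n + 1) | p.1 = 0 ∧ p.2 ≠ 0 ∧ σ 0 = 0} =
        {0} ×ˢ {0}ᶜ := by
      ext
      simp [h]
    calc
      Nat.card {p : Fin (n + 1) × Fin (n + 1) // p.1 = 0 ∧ p.2 ≠ 0 ∧ σ 0 = 0}
      _ = (({0} : Set (Fin (n + 1))) ×ˢ ({0}ᶜ : Set (Fin (n + 1)))).ncard :=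
        congrArg Set.ncard hprod
      _ = n := by simp [Set.ncard_eq_toFinset_card', Finset.card_compl]
  · simp [h]

end Occurrences

theorem isKing_iff_forall_castSucc_succ {n : ℕ} {σ : Equiv.Perm (Fin (n + 1))} :
    IsKing σ ↔ ∀ i : Fin n, 1 < |((σ i.succ : ℕ) : ℤ) - ((σ i.castSucc : ℕ) : ℤ)| :=
  ⟨fun h i => h i.castSucc (Nat.succ_lt_succ i.isLt),
    fun h i hi => h ⟨i, Nat.lt_of_succ_lt_succ hi⟩⟩

section PrependZero

variable {n : ℕ}

/-- The direct sum `1 ⊕ σ` of permutations: put the smallest value in front of `σ` and raise all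
values of `σ` by one. -/
def prependZero (σ : Equiv.Perm (Fin n)) : Equiv.Perm (Fin (n + 1)) :=
  Equiv.Perm.decomposeFin.symm (0, σ)

@[simp]
theorem prependZero_zero (σ : Equiv.Perm (Fin n)) : prependZero σ 0 = 0 := by
  simp [prependZero]

@[simp]
theorem prependZero_succ (σ : Equiv.Perm (Fin n)) (i : Fin n) :
    prependZero σ i.succ = (σ i).succ := by
  simp [prependZero]

theorem prependZero_injective : Function.Injective (prependZero (n := n)) :=
  Equiv.Perm.decomposeFin.symm.injective.comp (Prod.mk_right_injective 0)

theorem exists_prependZero_eq {σ : Equiv.Perm (Fin (n + 1))} (h : σ 0 = 0) :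
    ∃ τ, prependZero τ = σ := by
  obtain ⟨⟨a, τ⟩, rfl⟩ := Equiv.Perm.decomposeFin.symm.surjective σ
  obtain rfl : a = 0 := by simpa only [Equiv.Perm.decomposeFin_symm_apply_zero] using h
  exact ⟨τ, rfl⟩

theorem isKing_prependZero_iff {σ : Equiv.Perm (Fin n)} :
    IsKing (prependZero σ) ↔ IsKing σ ∧ ∀ h : 0 < n, σ ⟨0, h⟩ ≠ ⟨0, h⟩ := by
  cases n with
  | zero =>
    rw [isKing_iff_forall_castSucc_succ]
    exact ⟨fun _ => ⟨finZeroElim, fun h => (lt_irrefl 0 h).elim⟩, fun _ => finZeroElim⟩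
  | succ n =>
    have hfirst : 1 < |(((σ 0).succ : ℕ) : ℤ) - ((0 : Fin (n + 2)) : ℕ)| ↔ σ 0 ≠ 0 := by
      rw [Fin.val_zero, Nat.cast_zero, sub_zero, Nat.abs_cast, Nat.one_lt_cast, Fin.val_succ,
        Nat.lt_add_left_iff_pos, Fin.val_pos_iff, Fin.pos_iff_ne_zero]
    rw [isKing_iff_forall_castSucc_succ, isKing_iff_forall_castSucc_succ, Fin.forall_fin_succ,
      and_comm]
    refine and_congr (forall_congr' fun i => ?_) ?_
    · simp only [← Fin.succ_castSucc, prependZero_succ, Fin.val_succ, Nat.cast_add,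
        add_sub_add_right_eq_sub]
    · rw [prependZero_succ, Fin.castSucc_zero, prependZero_zero, hfirst]
      exact ⟨fun h _ => h, fun h => h n.succ_pos⟩

theorem card_isKing_apply_zero_eq_zero :
    Nat.card {σ : Equiv.Perm (Fin (n + 1)) // IsKing σ ∧ σ 0 = 0} = Bcount n := by
  symm
  refine Nat.card_eq_of_bijective
    (fun τ => ⟨prependZero τ.1, isKing_prependZero_iff.mpr τ.2, prependZero_zero τ.1⟩) ⟨?_, ?_⟩
  · exact fun τ τ' h => Subtype.ext (prependZero_injective (congrArg Subtype.val h))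
  · rintro ⟨σ, hking, hzero⟩
    obtain ⟨τ, rfl⟩ := exists_prependZero_eq hzero
    exact ⟨⟨τ, isKing_prependZero_iff.mp hking⟩, rfl⟩

theorem card_isKing_apply_zero_ne_zero :
    Nat.card {σ : Equiv.Perm (Fin (n + 1)) // IsKing σ ∧ σ 0 ≠ 0} = Bcount (n + 1) :=
  Nat.card_congr (Equiv.subtypeEquivRight fun _ =>
    and_congr_right' ⟨fun h _ => h, fun h => h n.succ_pos⟩)

end PrependZero

theorem sum_isKing_pow_occTwelve {R : Type*} [Semiring R] (u : R) (n : ℕ)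
    [DecidablePred (IsKing (n := n + 1))] :
    ∑ σ : Equiv.Perm (Fin (n + 1)) with IsKing σ, u ^ occTwelve σ =
      Bcount (n + 1) + u ^ n * Bcount n := by
  rw [← Finset.sum_filter_not_add_sum_filter _ (fun σ => σ 0 = 0), Finset.filter_filter,
    Finset.filter_filter]
  congr 1
  · calc
      ∑ σ : Equiv.Perm (Fin (n + 1)) with IsKing σ ∧ σ 0 ≠ 0, u ^ occTwelve σ
      _ = ∑ σ : Equiv.Perm (Fin (n + 1)) with IsKing σ ∧ σ 0 ≠ 0, 1 :=
        Finset.sum_congr rfl fun σ hσ => by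
          rw [occTwelve_eq_ite, if_neg (Finset.mem_filter.mp hσ).2.2, pow_zero]
      _ = Bcount (n + 1) := by
        rw [Finset.sum_const, nsmul_one, ← Fintype.card_subtype, ← Nat.card_eq_fintype_card,
          card_isKing_apply_zero_ne_zero]
  · calc
      ∑ σ : Equiv.Perm (Fin (n + 1)) with IsKing σ ∧ σ 0 = 0, u ^ occTwelve σ
      _ = ∑ σ : Equiv.Perm (Fin (n + 1)) with IsKing σ ∧ σ 0 = 0, u ^ n :=
        Finset.sum_congr rfl fun σ hσ => by
          rw [occTwelve_eq_ite, if_pos (Finset.mem_filter.mp hσ).2.2]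
      _ = u ^ n * Bcount n := by
        rw [Finset.sum_const, nsmul_eq_mul', ← Fintype.card_subtype, ← Nat.card_eq_fintype_card,
          card_isKing_apply_zero_eq_zero]

theorem statement_7_general {R : Type*} [Semiring R] (u : R) (n : ℕ)
    [DecidablePred (IsKing (n := n + 1))] :
    (∑ σ : Equiv.Perm (Fin (n + 1)), if IsKing σ then u ^ occTwelve σ else 0) =
      Bcount (n + 1) + u ^ n * Bcount n ∧
    (∀ σ : Equiv.Perm (Fin (n + 1)),
      (σ 0 = 0 → occTwelve σ = n) ∧ (σ 0 ≠ 0 → occTwelve σ = 0)) ∧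
    Nat.card {σ : Equiv.Perm (Fin (n + 1)) // IsKing σ ∧ σ 0 = 0} = Bcount n :=
  ⟨(Finset.sum_filter _ _).symm.trans (sum_isKing_pow_occTwelve u n),
    fun σ => ⟨fun h => (occTwelve_eq_ite σ).trans (if_pos h),
      fun h => (occTwelve_eq_ite σ).trans (if_neg h)⟩,
    card_isKing_apply_zero_eq_zero⟩

open Classical in
theorem statement_7 (n : ℕ) (hn : 1 ≤ n) :
    (∑ σ : Equiv.Perm (Fin n),
        if IsKing σ then (Polynomial.X : Polynomial ℚ) ^ occTwelve σ else 0)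
      = (Bcount n : Polynomial ℚ)
        + (Polynomial.X : Polynomial ℚ) ^ (n - 1) * (Bcount (n - 1) : Polynomial ℚ) ∧
    (∀ σ : Equiv.Perm (Fin n), IsKing σ → 2 ≤ n →
      (σ ⟨0, by omega⟩ = ⟨0, by omega⟩ → occTwelve σ = n - 1) ∧
      (σ ⟨0, by omega⟩ ≠ ⟨0, by omega⟩ → occTwelve σ = 0)) ∧
    (2 ≤ n →
      Nat.card {σ : Equiv.Perm (Fin n) //
          IsKing σ ∧ σ ⟨0, by omega⟩ = ⟨0, by omega⟩} = Bcount (n - 1)) := by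
  obtain ⟨n, rfl⟩ := Nat.exists_eq_add_of_le' hn
  exact (statement_7_general Polynomial.X n).imp_right
    (And.imp (fun hocc σ _ _ => hocc σ) fun hcard _ => hcard)
end

section
/- Let occ(σ) be the number of occurrences in σ of the mesh pattern Nr. 19, where an occurrence is a pair of indices i < j with a = σ_i < σ_j = b such that: every element before position i has value less than a; every element strictly between positions i and j has value less than a; and every element after position j has value strictly between a and b. Let E(t,u) = Σ_{n≥0} t^n Σ_{σ∈K_n} u^{occ(σ)}. Then (1+t)·E(t,u) = ((1+t)(1+t−ut) − t(1−u)·A(t))·A(t) as formal power series in t over ℚ[u]. -/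
/-- `t`, the power series variable. -/
noncomputable def T : PowerSeries (Polynomial ℚ) :=
  PowerSeries.X

/-- An occurrence of the mesh pattern Nr. 19 in `σ`. -/
def OccP {n : ℕ} (σ : Equiv.Perm (Fin n)) (i j : Fin n) : Prop :=
  i < j ∧ σ i < σ j ∧
    (∀ k : Fin n, k < i → σ k < σ i) ∧
    (∀ k : Fin n, i < k → k < j → σ k < σ i) ∧
    (∀ k : Fin n, j < k → σ i < σ k ∧ σ k < σ j)

/-- The number of occurrences of the mesh pattern Nr. 19 in `σ`. -/
noncomputable def occP {n : ℕ} (σ : Equiv.Perm (Fin n)) : ℕ :=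
  Nat.card {p : Fin n × Fin n // OccP σ p.1 p.2}

-- `E(t,u) = Σ_{n≥0} t^n Σ_{σ∈K_n} u^{occ(σ)}`, a power series in `t` over `ℚ[u]`.
open Classical in
noncomputable def Etu : PowerSeries (Polynomial ℚ) :=
  PowerSeries.mk fun n =>
    ∑ σ : Equiv.Perm (Fin n),
      if IsKing σ then (Polynomial.X : Polynomial ℚ) ^ occP σ else 0

/-!
Count positions and values from `0`. An occurrence `(i, j)` of the pattern forces the entries before
position `j` to be exactly the values smaller than `j`, and `σ j` to be the maximum. Hence `σ`
contains the pattern if and only if `σ = π ⊕ ρ` with `π` nonempty and `ρ` starting with its maximum;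
this decomposition is unique, so the pattern occurs at most once and `E = A - (1 - u) F`, where `F`
counts the king permutations of this form.

Let `B` count the king permutations starting with their maximum. Putting a new maximum in front of a
king permutation yields a king permutation unless it already started with its maximum, so
`t A = B + t B`. If `π` and `ρ` are king permutations as above, then `π ⊕ ρ` is one too, unless
`ρ = 1` and `π` ends with its maximum; by reversal the exceptions are counted by `t B`, so
`(A - 1) B = F + t B`. Eliminating `B` and `F` gives the theorem.
-/

section GenFun

open Finset.HasAntidiagonal PowerSeries

variable {α β γ : Type*} (R : Type*) [Semiring R]

/-- The ordinary generating function of the class `S`, whose objects are weighted by `size`.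
A size attained by infinitely many objects contributes the coefficient `0`. -/
noncomputable def genFun (size : α → ℕ) (S : Set α) : PowerSeries R :=
  PowerSeries.mk fun n => ({x ∈ S | size x = n}.ncard : R)

theorem genFun_union {size : α → ℕ} {A B : Set α} (h : Disjoint A B)
    (hA : ∀ n, {x ∈ A | size x = n}.Finite) (hB : ∀ n, {x ∈ B | size x = n}.Finite) :
    genFun R size (A ∪ B) = genFun R size A + genFun R size B := by
  ext n
  have hdisj := h.mono (Set.sep_subset A (size · = n)) (Set.sep_subset B (size · = n))
  simp [genFun, Set.ncard_union_eq hdisj (hA n) (hB n)]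

theorem genFun_image {size : α → ℕ} {size' : β → ℕ} {f : α → β} {A : Set α} (k : ℕ)
    (hf : Set.InjOn f A) (hsize : ∀ x ∈ A, size' (f x) = size x + k) :
    genFun R size' (f '' A) = X ^ k * genFun R size A := by
  ext n
  rw [coeff_X_pow_mul', genFun, coeff_mk]
  split_ifs with hk
  · have himage : {y ∈ f '' A | size' y = n} = f '' {x ∈ A | size x = n - k} := by
      grind
    rw [genFun, coeff_mk, himage, (hf.mono (Set.sep_subset _ _)).ncard_image]
  · have hempty : {y ∈ f '' A | size' y = n} = ∅ := by
      grind
    rw [hempty, Set.ncard_empty, Nat.cast_zero]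

theorem genFun_image2 {size : α → ℕ} {size' : β → ℕ} {size'' : γ → ℕ} {f : α → β → γ}
    {A : Set α} {B : Set β} (hA : ∀ n, {x ∈ A | size x = n}.Finite)
    (hB : ∀ n, {y ∈ B | size' y = n}.Finite) (hf : Set.InjOn (Function.uncurry f) (A ×ˢ B))
    (hsize : ∀ x ∈ A, ∀ y ∈ B, size'' (f x y) = size x + size' y) :
    genFun R size'' (Set.image2 f A B) = genFun R size A * genFun R size' B := by
  ext n
  let pairs (p : ℕ × ℕ) : Set (α × β) := {x ∈ A | size x = p.1} ×ˢ {y ∈ B | size' y = p.2}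
  have himage : {z ∈ Set.image2 f A B | size'' z = n} =
      Function.uncurry f '' ⋃ p ∈ antidiagonal n, pairs p := by
    ext z
    simp only [pairs, Set.mem_ofPred_eq, Set.mem_image2, Set.mem_image, Set.mem_iUnion]
    constructor
    · rintro ⟨⟨x, hx, y, hy, rfl⟩, hz⟩
      exact ⟨(x, y), ⟨(size x, size' y), by simp [← hz, hsize x hx y hy], ⟨hx, rfl⟩, hy, rfl⟩, rfl⟩
    · rintro ⟨⟨x, y⟩, ⟨p, hp, ⟨hx, hxp⟩, hy, hyp⟩, rfl⟩
      refine ⟨⟨x, hx, y, hy, rfl⟩, ?_⟩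
      rw [Function.uncurry_apply_pair, hsize x hx y hy, hxp, hyp, mem_antidiagonal.1 hp]
  have hsub : ⋃ p ∈ antidiagonal n, pairs p ⊆ A ×ˢ B :=
    Set.iUnion₂_subset fun _ _ => Set.prod_mono (Set.sep_subset _ _) (Set.sep_subset _ _)
  have hdisj : (antidiagonal n : Set (ℕ × ℕ)).PairwiseDisjoint pairs := by
    refine fun p _ q _ hpq => Set.disjoint_left.2 fun z hp hq => hpq (Prod.ext ?_ ?_)
    · exact hp.1.2.symm.trans hq.1.2
    · exact hp.2.2.symm.trans hq.2.2
  have hcard := (antidiagonal n).finite_toSet.ncard_biUnion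
    (fun p _ => (hA p.1).prod (hB p.2)) hdisj
  simp only [Finset.mem_coe] at hcard
  rw [coeff_mul, genFun, coeff_mk, himage, (hf.mono hsub).ncard_image, hcard,
    finsum_mem_finset_eq_sum]
  simp [Set.ncard_prod, genFun]

end GenFun

/-- The one-line words of permutations of `{0, …, n - 1}`, for all `n` at once. -/
def permWords : Set (List ℕ) := {l | l.Perm (List.range l.length)}

/-- The entries `a` and `b` may stand next to each other in a king permutation. -/
def NonAdjacent (a b : ℕ) : Prop := a + 1 < b ∨ b + 1 < a

/-- The words of the king permutations of all lengths. -/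
def kings : Set (List ℕ) := {l ∈ permWords | l.IsChain NonAdjacent}

/-- The permutation word obtained by putting a new maximum in front of a permutation word. -/
def consMax (l : List ℕ) : List ℕ := l.length :: l

/-- The permutation word obtained by putting a new maximum at the end of a permutation word. -/
def concatMax (l : List ℕ) : List ℕ := l ++ [l.length]

/-- The direct sum `l ⊕ l'` of permutation words. -/
def directSum (l l' : List ℕ) : List ℕ := l ++ l'.map (l.length + ·)

/-- The permutation words `l ⊕ l'` in which `l` is nonempty and `l'` starts with its maximum. They
turn out to be those containing the mesh pattern, whose `b` is then the first entry of the
summand `l'`. -/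
def maxSplitWords : Set (List ℕ) :=
  Set.image2 directSum (permWords \ {[]}) (permWords ∩ Set.range consMax)

theorem length_directSum (l l' : List ℕ) : (directSum l l').length = l.length + l'.length := by
  simp [directSum]

theorem getElem_directSum_lt_iff {l l' : List ℕ} (hl : ∀ x ∈ l, x < l.length) {k : ℕ}
    (hk : k < (directSum l l').length) : (directSum l l')[k] < l.length ↔ k < l.length := by
  by_cases hkl : k < l.length
  · simp [directSum, List.getElem_append_left hkl, hkl, hl]
  · simp [directSum, List.getElem_append_right (not_lt.1 hkl), hkl]

theorem getElem_directSum_length (l r : List ℕ) (x : ℕ) :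
    (directSum l (x :: r))[l.length]'(by simp [directSum]) = l.length + x := by
  simp [directSum]

theorem consMax_injective : Function.Injective consMax :=
  fun _ _ h => (List.cons.inj h).2

theorem concatMax_injective : Function.Injective concatMax :=
  fun _ _ h => (List.append_inj' h rfl).1

theorem directSum_singleton_zero (l : List ℕ) : directSum l [0] = concatMax l := rfl

theorem lt_length_of_mem_permWords {l : List ℕ} (hl : l ∈ permWords) {x : ℕ} (hx : x ∈ l) :
    x < l.length :=
  List.mem_range.1 (hl.subset hx)

theorem mem_permWords_of_nodup {l : List ℕ} (hl : l.Nodup) (hlt : ∀ x ∈ l, x < l.length) :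
    l ∈ permWords :=
  (hl.subperm fun x hx => List.mem_range.2 (hlt x hx)).perm_of_length_le (by simp)

theorem finite_permWords_length_eq (n : ℕ) : {l ∈ permWords | l.length = n}.Finite := by
  refine (List.range n).permutations.finite_toSet.subset ?_
  rintro l ⟨hl, rfl⟩
  exact List.mem_permutations.2 hl

theorem consMax_mem_permWords {l : List ℕ} : consMax l ∈ permWords ↔ l ∈ permWords := by
  change (l.length :: l).Perm (List.range (l.length + 1)) ↔ _
  have hrange : (List.range (l.length + 1)).Perm (l.length :: List.range l.length) := by
    rw [List.range_succ]
    exact List.perm_append_singleton ..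
  rw [hrange.congr_right, List.perm_cons]
  rfl

theorem directSum_mem_permWords {l l' : List ℕ} (hl : l ∈ permWords) :
    directSum l l' ∈ permWords ↔ l' ∈ permWords := by
  change (directSum l l').Perm (List.range (directSum l l').length) ↔ _
  rw [length_directSum, List.range_add, directSum, (hl.symm.append_right _).congr_right,
    List.perm_append_left_iff, List.map_perm_map_iff (add_right_injective _)]
  rfl

theorem concatMax_mem_permWords {l : List ℕ} (hl : l ∈ permWords) : concatMax l ∈ permWords := by
  rw [← directSum_singleton_zero, directSum_mem_permWords hl]
  exact .refl _

theorem exists_eq_directSum {l r : List ℕ} (hl : l ∈ permWords) (hlr : l ++ r ∈ permWords) :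
    ∃ l' ∈ permWords, l ++ r = directSum l l' := by
  have hle : ∀ x ∈ r, l.length ≤ x := by
    intro x hx
    by_contra! hlt
    have hxl : x ∈ l := hl.symm.subset (List.mem_range.2 hlt)
    exact (List.nodup_append.1 (hlr.nodup_iff.2 List.nodup_range)).2.2 x hxl x hx rfl
  have hr : l ++ r = directSum l (r.map (· - l.length)) := by
    rw [directSum, List.map_map, List.map_congr_left (g := id) (by grind), List.map_id]
  exact ⟨_, (directSum_mem_permWords hl).1 (hr ▸ hlr), hr⟩

theorem mem_range_consMax {l : List ℕ} :
    l ∈ Set.range consMax ↔ ∃ x ∈ l.head?, x + 1 = l.length := by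
  cases l <;> simp [consMax, eq_comm]

theorem reverse_mem_range_consMax {l : List ℕ} :
    l.reverse ∈ Set.range consMax ↔ l ∈ Set.range concatMax := by
  constructor
  · rintro ⟨r, hr⟩
    exact ⟨r.reverse, by simpa [consMax, concatMax] using congrArg List.reverse hr⟩
  · rintro ⟨r, rfl⟩
    exact ⟨r.reverse, by simp [consMax, concatMax]⟩

theorem mem_range_concatMax {l : List ℕ} :
    l ∈ Set.range concatMax ↔ ∃ x ∈ l.getLast?, x + 1 = l.length := by
  rw [← reverse_mem_range_consMax, mem_range_consMax, List.head?_reverse, List.length_reverse]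

-- The position of the maximum in `l ⊕ l'` is the length of `l`.
theorem injOn_directSum :
    Set.InjOn (Function.uncurry directSum) (permWords ×ˢ Set.range consMax) := by
  have hidx : ∀ l ∈ permWords, ∀ r, (directSum l (consMax r)).idxOf (l.length + r.length) =
      l.length := by
    intro l hl r
    have hnot : l.length + r.length ∉ l := fun h => by
      have := lt_length_of_mem_permWords hl h
      omega
    rw [directSum, List.idxOf_append_of_notMem hnot]
    simp [consMax]
  rintro ⟨l, _⟩ ⟨hl, r, rfl⟩ ⟨m, _⟩ ⟨hm, s, rfl⟩ (h : directSum l _ = directSum m _)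
  have htotal : l.length + r.length = m.length + s.length := by
    simpa [length_directSum, consMax, ← add_assoc] using congrArg List.length h
  have hlength : l.length = m.length := by
    rw [← hidx l hl r, h, htotal, hidx m hm s]
  obtain ⟨rfl, hmap⟩ := List.append_inj h hlength
  exact congrArg (l, ·) (List.map_injective_iff.2 (add_right_injective _) hmap)

theorem NonAdjacent.symm {a b : ℕ} (h : NonAdjacent a b) : NonAdjacent b a := Or.symm h

theorem kings_subset_permWords : kings ⊆ permWords := Set.sep_subset _ _

theorem finite_length_eq_of_subset_permWords {S : Set (List ℕ)} (hS : S ⊆ permWords) (n : ℕ) :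
    {l ∈ S | l.length = n}.Finite :=
  (finite_permWords_length_eq n).subset fun _ h => ⟨hS h.1, h.2⟩

theorem nil_mem_kings : [] ∈ kings := ⟨.refl _, .nil⟩

theorem reverse_mem_kings {l : List ℕ} : l.reverse ∈ kings ↔ l ∈ kings := by
  have hsymm : (fun a b => NonAdjacent b a) = NonAdjacent := by
    funext a b
    exact propext ⟨.symm, .symm⟩
  simp only [kings, permWords, Set.mem_ofPred_eq, List.length_reverse, List.isChain_reverse, hsymm,
    (List.reverse_perm l).congr_left]

theorem consMax_mem_kings {l : List ℕ} :
    consMax l ∈ kings ↔ l ∈ kings ∧ l ∉ Set.range consMax := by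
  have hhead : l ∈ permWords →
      ((∀ x ∈ l.head?, NonAdjacent l.length x) ↔ l ∉ Set.range consMax) := by
    intro hl
    rw [mem_range_consMax, not_exists]
    refine forall_congr' fun x => ?_
    rw [not_and]
    refine imp_congr_right fun hx => ?_
    have := lt_length_of_mem_permWords hl (List.mem_of_head? hx)
    unfold NonAdjacent
    omega
  change consMax l ∈ permWords ∧ (l.length :: l).IsChain NonAdjacent ↔ (l ∈ permWords ∧ _) ∧ _
  rw [consMax_mem_permWords, List.isChain_cons]
  tauto

theorem isChain_nonAdjacent_map_add {l : List ℕ} (k : ℕ) :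
    (l.map (k + ·)).IsChain NonAdjacent ↔ l.IsChain NonAdjacent := by
  simp only [List.isChain_map, NonAdjacent, add_assoc, Nat.add_lt_add_iff_left]
  rfl

theorem directSum_consMax_mem_kings {l r : List ℕ} (hl : l ∈ permWords) (hnil : l ≠ []) :
    directSum l (consMax r) ∈ kings ↔
      l ∈ kings ∧ consMax r ∈ kings ∧ ¬ (r = [] ∧ l ∈ Set.range concatMax) := by
  have hjunction : (∀ x ∈ l.getLast?, ∀ y ∈ ((consMax r).map (l.length + ·)).head?,
      NonAdjacent x y) ↔ ¬ (r = [] ∧ l ∈ Set.range concatMax) := by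
    have hlast := lt_length_of_mem_permWords hl (List.getLast_mem hnil)
    rw [mem_range_concatMax, ← List.length_eq_zero_iff, List.getLast?_eq_some_getLast hnil]
    simp only [consMax, List.map_cons, List.head?_cons, Option.mem_some_iff, forall_eq',
      exists_eq_left', NonAdjacent]
    omega
  change directSum l (consMax r) ∈ permWords ∧ (directSum l (consMax r)).IsChain NonAdjacent ↔
    (l ∈ permWords ∧ _) ∧ (consMax r ∈ permWords ∧ _) ∧ _
  rw [directSum_mem_permWords hl, directSum, List.isChain_append, hjunction,
    isChain_nonAdjacent_map_add]
  tauto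

theorem image_consMax_kings :
    consMax '' kings = (kings ∩ Set.range consMax) ∪ consMax '' (kings ∩ Set.range consMax) := by
  ext l
  constructor
  · rintro ⟨r, hr, rfl⟩
    by_cases hmax : r ∈ Set.range consMax
    · exact .inr ⟨r, ⟨hr, hmax⟩, rfl⟩
    · exact .inl ⟨consMax_mem_kings.2 ⟨hr, hmax⟩, r, rfl⟩
  · rintro (⟨hl, r, rfl⟩ | ⟨r, hr, rfl⟩)
    · exact ⟨r, (consMax_mem_kings.1 hl).1, rfl⟩
    · exact ⟨r, hr.1, rfl⟩

theorem disjoint_kings_image_consMax :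
    Disjoint (kings ∩ Set.range consMax) (consMax '' (kings ∩ Set.range consMax)) := by
  rw [Set.disjoint_left]
  rintro _ ⟨hl, -⟩ ⟨r, ⟨-, hmax⟩, rfl⟩
  exact (consMax_mem_kings.1 hl).2 hmax

theorem image2_directSum_kings :
    Set.image2 directSum (kings \ {[]}) (kings ∩ Set.range consMax) =
      (kings ∩ maxSplitWords) ∪ concatMax '' (kings ∩ Set.range concatMax) := by
  ext w
  constructor
  · rintro ⟨l, ⟨hl, hnil⟩, _, ⟨hl', r, rfl⟩, rfl⟩
    by_cases hmax : r = [] ∧ l ∈ Set.range concatMax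
    · obtain ⟨rfl, hmax⟩ := hmax
      exact .inr ⟨l, ⟨hl, hmax⟩, rfl⟩
    · exact .inl ⟨(directSum_consMax_mem_kings hl.1 hnil).2 ⟨hl, hl', hmax⟩,
        l, ⟨hl.1, hnil⟩, _, ⟨hl'.1, r, rfl⟩, rfl⟩
  · rintro (⟨hw, l, ⟨hl, hnil⟩, _, ⟨-, r, rfl⟩, rfl⟩ | ⟨l, ⟨hl, s, rfl⟩, rfl⟩)
    · obtain ⟨hl, hl', -⟩ := (directSum_consMax_mem_kings hl hnil).1 hw
      exact ⟨l, ⟨hl, hnil⟩, _, ⟨hl', r, rfl⟩, rfl⟩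
    · exact ⟨concatMax s, ⟨hl, by simp [concatMax]⟩, consMax [],
        ⟨consMax_mem_kings.2 ⟨nil_mem_kings, by simp [consMax]⟩, [], rfl⟩, rfl⟩

theorem concatMax_notMem_kings {l : List ℕ} (hl : l ∈ kings) (hmax : l ∈ Set.range concatMax) :
    concatMax l ∉ kings := by
  have hnil : l ≠ [] := by
    obtain ⟨s, rfl⟩ := hmax
    simp [concatMax]
  exact fun h => ((directSum_consMax_mem_kings hl.1 hnil (r := [])).1 h).2.2 ⟨rfl, hmax⟩

theorem disjoint_kings_image_concatMax :
    Disjoint (kings ∩ maxSplitWords) (concatMax '' (kings ∩ Set.range concatMax)) := by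
  rw [Set.disjoint_left]
  rintro _ ⟨hw, -⟩ ⟨l, ⟨hl, hmax⟩, rfl⟩
  exact concatMax_notMem_kings hl hmax hw

theorem image_reverse_kings :
    List.reverse '' (kings ∩ Set.range consMax) = kings ∩ Set.range concatMax := by
  ext l
  constructor
  · rintro ⟨r, ⟨hr, hmax⟩, rfl⟩
    refine ⟨reverse_mem_kings.2 hr, reverse_mem_range_consMax.1 ?_⟩
    rwa [List.reverse_reverse]
  · rintro ⟨hl, hmax⟩
    exact ⟨l.reverse, ⟨reverse_mem_kings.2 hl, reverse_mem_range_consMax.2 hmax⟩,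
      List.reverse_reverse l⟩

section KingGenFun

open PowerSeries

variable (R : Type*) [Semiring R]

theorem genFun_kings_eq_add_one :
    genFun R List.length kings = genFun R List.length (kings \ {[]}) + 1 := by
  have hnil : genFun R List.length {([] : List ℕ)} = 1 := by
    ext n
    have hsep : {l ∈ ({[]} : Set (List ℕ)) | l.length = n} = if n = 0 then {[]} else ∅ := by
      grind
    rw [genFun, coeff_mk, coeff_one, hsep]
    split_ifs <;> simp
  have hfin := finite_length_eq_of_subset_permWords kings_subset_permWords
  rw [← hnil, ← genFun_union R disjoint_sdiff_self_left
    (fun n => (hfin n).subset fun _ h => ⟨h.1.1, h.2⟩)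
    (fun n => (Set.finite_singleton _).subset (Set.sep_subset _ _)),
    Set.sdiff_union_of_subset (Set.singleton_subset_iff.2 nil_mem_kings)]

theorem genFun_image_consMax (A : Set (List ℕ)) :
    genFun R List.length (consMax '' A) = X * genFun R List.length A := by
  rw [genFun_image R 1 consMax_injective.injOn fun _ _ => rfl, pow_one]

theorem genFun_image_concatMax (A : Set (List ℕ)) :
    genFun R List.length (concatMax '' A) = X * genFun R List.length A := by
  rw [genFun_image R 1 concatMax_injective.injOn fun _ _ => List.length_append, pow_one]

theorem X_mul_genFun_kings :
    X * genFun R List.length kings =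
      genFun R List.length (kings ∩ Set.range consMax) +
        X * genFun R List.length (kings ∩ Set.range consMax) := by
  have hsub : kings ∩ Set.range consMax ⊆ permWords :=
    Set.inter_subset_left.trans kings_subset_permWords
  have himage : consMax '' (kings ∩ Set.range consMax) ⊆ permWords :=
    Set.image_subset_iff.2 fun _ hl => consMax_mem_permWords.2 (hsub hl)
  rw [← genFun_image_consMax, ← genFun_image_consMax, image_consMax_kings,
    genFun_union R disjoint_kings_image_consMax (finite_length_eq_of_subset_permWords hsub)
      (finite_length_eq_of_subset_permWords himage)]

theorem genFun_kings_range_concatMax :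
    genFun R List.length (kings ∩ Set.range concatMax) =
      genFun R List.length (kings ∩ Set.range consMax) := by
  rw [← image_reverse_kings, genFun_image R 0 List.reverse_injective.injOn
    fun l _ => List.length_reverse, pow_zero, one_mul]

theorem genFun_kings_diff_nil_mul_genFun_consMax :
    genFun R List.length (kings \ {[]}) * genFun R List.length (kings ∩ Set.range consMax) =
      genFun R List.length (kings ∩ maxSplitWords) +
        X * genFun R List.length (kings ∩ Set.range consMax) := by
  have hfin := fun {A} (hA : A ⊆ kings) =>
    finite_length_eq_of_subset_permWords (hA.trans kings_subset_permWords)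
  have himage : concatMax '' (kings ∩ Set.range concatMax) ⊆ permWords :=
    Set.image_subset_iff.2 fun _ hl => concatMax_mem_permWords hl.1.1
  have hinj := injOn_directSum.mono (Set.prod_mono
    (Set.sdiff_subset.trans kings_subset_permWords : kings \ {[]} ⊆ permWords)
    (Set.inter_subset_right : kings ∩ Set.range consMax ⊆ _))
  rw [← genFun_image2 R (hfin Set.sdiff_subset) (hfin Set.inter_subset_left) hinj
      fun _ _ _ _ => length_directSum _ _, image2_directSum_kings,
    genFun_union R disjoint_kings_image_concatMax (hfin Set.inter_subset_left)
      (finite_length_eq_of_subset_permWords himage),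
    genFun_image_concatMax, genFun_kings_range_concatMax]

end KingGenFun

section Permutations

variable {n : ℕ}

/-- The word `σ_1 σ_2 ⋯ σ_n` of a permutation, with entries and positions starting from `0`. -/
def word (σ : Equiv.Perm (Fin n)) : List ℕ := List.ofFn fun i => (σ i : ℕ)

theorem length_word (σ : Equiv.Perm (Fin n)) : (word σ).length = n := List.length_ofFn

theorem getElem_word (σ : Equiv.Perm (Fin n)) {i : ℕ} (hi : i < (word σ).length) :
    (word σ)[i] = σ ⟨i, length_word σ ▸ hi⟩ :=
  List.getElem_ofFn hi

theorem word_injective : Function.Injective (word (n := n)) := fun _ _ h =>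
  Equiv.ext fun i => Fin.ext (congrFun (List.ofFn_injective h) i)

theorem nodup_word (σ : Equiv.Perm (Fin n)) : (word σ).Nodup :=
  List.nodup_ofFn.2 (Fin.val_injective.comp σ.injective)

theorem word_mem_permWords (σ : Equiv.Perm (Fin n)) : word σ ∈ permWords :=
  mem_permWords_of_nodup (nodup_word σ) <| by
    rw [length_word, word, List.forall_mem_ofFn_iff]
    exact fun i => (σ i).isLt

theorem exists_word_eq {l : List ℕ} (hl : l ∈ permWords) (hn : l.length = n) :
    ∃ σ : Equiv.Perm (Fin n), word σ = l := by
  subst hn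
  let entry (i : Fin l.length) : Fin l.length :=
    ⟨l[i], lt_length_of_mem_permWords hl (List.getElem_mem i.isLt)⟩
  have hinj : Function.Injective entry := fun i j h =>
    Fin.ext ((hl.nodup_iff.2 List.nodup_range).getElem_inj_iff.1 (congrArg Fin.val h))
  exact ⟨.ofBijective entry (Finite.injective_iff_bijective.1 hinj), List.ofFn_getElem⟩

theorem coeff_genFun_length (R : Type*) [Semiring R] {A : Set (List ℕ)} (hA : A ⊆ permWords) :
    PowerSeries.coeff n (genFun R List.length A) =
      (Nat.card {σ : Equiv.Perm (Fin n) // word σ ∈ A} : R) := by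
  have himage : {l ∈ A | l.length = n} = word '' {σ : Equiv.Perm (Fin n) | word σ ∈ A} := by
    ext l
    constructor
    · rintro ⟨hl, hn⟩
      obtain ⟨σ, rfl⟩ := exists_word_eq (hA hl) hn
      exact ⟨σ, hl, rfl⟩
    · rintro ⟨σ, hσ, rfl⟩
      exact ⟨hσ, length_word σ⟩
  rw [genFun, PowerSeries.coeff_mk, himage, Set.ncard_image_of_injective _ word_injective]
  rfl

theorem word_mem_kings {σ : Equiv.Perm (Fin n)} : word σ ∈ kings ↔ IsKing σ := by
  have hadj : ∀ a b : ℕ, NonAdjacent a b ↔ 1 < |(b : ℤ) - a| := by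
    intro a b
    rw [NonAdjacent, lt_abs]
    omega
  simp only [kings, Set.mem_ofPred_eq, word_mem_permWords, true_and, List.isChain_iff_getElem,
    hadj, getElem_word, length_word, IsKing]
  exact ⟨fun h i hi => h i hi, fun h i hi => h ⟨i, by omega⟩ hi⟩

/-- The position `j` carries the maximum of `σ`, and `σ` permutes the positions before `j`.
For `j ≠ 0` this means that `j` is the second index of an occurrence of the mesh pattern. -/
def SplitsAtMax (σ : Equiv.Perm (Fin n)) (j : Fin n) : Prop :=
  (∀ k, σ k ≤ σ j) ∧ ∀ k, σ k < j ↔ k < j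

theorem SplitsAtMax.eq {σ : Equiv.Perm (Fin n)} {j j' : Fin n} (h : SplitsAtMax σ j)
    (h' : SplitsAtMax σ j') : j = j' :=
  σ.injective ((h'.1 j).antisymm (h.1 j'))

theorem forall_le_apply_iff {σ : Equiv.Perm (Fin n)} {j : Fin n} :
    (∀ k, σ k ≤ σ j) ↔ (σ j : ℕ) + 1 = n := by
  refine ⟨fun h => ?_, fun h k => Fin.le_def.2 (by omega)⟩
  have hn := j.isLt
  have hlast := h (σ.symm ⟨n - 1, by omega⟩)
  rw [σ.apply_symm_apply, Fin.le_def] at hlast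
  simp only at hlast
  omega

theorem val_add_one_eq_of_forall_le_iff {σ : Equiv.Perm (Fin n)} {a j : Fin n}
    (h : ∀ k, σ k ≤ a ↔ k < j) : (a : ℕ) + 1 = j := by
  have hmap : (Finset.Iio j).map σ.toEmbedding = Finset.Iic a := by
    ext v
    obtain ⟨k, rfl⟩ := σ.surjective v
    simp [h]
  rw [← Fin.card_Iic, ← hmap, Finset.card_map, Fin.card_Iio]

theorem OccP.splitsAtMax {σ : Equiv.Perm (Fin n)} {i j : Fin n} (h : OccP σ i j) :
    SplitsAtMax σ j ∧ (σ i : ℕ) + 1 = j := by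
  obtain ⟨-, hlt, hbefore, hbetween, hafter⟩ := h
  have hle : ∀ k, σ k ≤ σ i ↔ k < j := by
    grind
  have hval := val_add_one_eq_of_forall_le_iff hle
  refine ⟨⟨by grind, fun k => ?_⟩, hval⟩
  rw [← hle k]
  omega

theorem OccP.of_splitsAtMax {σ : Equiv.Perm (Fin n)} {i j : Fin n} (h : SplitsAtMax σ j)
    (hi : (σ i : ℕ) + 1 = j) : OccP σ i j := by
  obtain ⟨hmax, hlt⟩ := h
  have hne : ∀ k l, k ≠ l → (σ k : ℕ) ≠ σ l := fun k l hkl h => hkl (σ.injective (Fin.ext h))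
  have hij : i < j := (hlt i).1 (by omega)
  have hprefix : ∀ k < j, k ≠ i → σ k < σ i := fun k hk hki => by
    have := (hlt k).2 hk
    have := hne k i hki
    omega
  have hsuffix : ∀ k, j ≤ k → σ i < σ k := fun k hk => by
    have := (hlt k).not.2 hk.not_gt
    omega
  exact ⟨hij, hsuffix j le_rfl, fun k hk => hprefix k (hk.trans hij) hk.ne,
    fun k hk hkj => hprefix k hkj hk.ne',
    fun k hk => ⟨hsuffix k hk.le, (hmax k).lt_of_ne (σ.injective.ne hk.ne')⟩⟩

theorem take_word_mem_permWords {σ : Equiv.Perm (Fin n)} {j : Fin n} (h : ∀ k < j, σ k < j) :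
    (word σ).take j ∈ permWords := by
  refine mem_permWords_of_nodup ((nodup_word σ).sublist (List.take_sublist _ _)) fun x hx => ?_
  obtain ⟨k, hk, rfl⟩ := List.getElem_of_mem hx
  simp only [List.length_take, length_word] at hk ⊢
  rw [List.getElem_take, getElem_word]
  have := h ⟨k, by omega⟩ (Fin.lt_def.2 (by simp only; omega))
  omega

theorem SplitsAtMax.word_mem_maxSplitWords {σ : Equiv.Perm (Fin n)} {j : Fin n}
    (h : SplitsAtMax σ j) (hj : 0 < (j : ℕ)) : word σ ∈ maxSplitWords := by
  have hprefix := take_word_mem_permWords fun k => (h.2 k).2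
  have hlen : ((word σ).take j).length = j := by
    simp [length_word, j.isLt.le]
  obtain ⟨l', hl', heq⟩ := exists_eq_directSum (r := (word σ).drop j) hprefix
    (by rw [List.take_append_drop]; exact word_mem_permWords σ)
  rw [List.take_append_drop] at heq
  have hn : j + l'.length = n := by
    rw [← hlen, ← length_directSum, ← heq, length_word]
  obtain ⟨x, r, rfl⟩ := List.exists_cons_of_length_pos (l := l') (by omega)
  have hx : (σ j : ℕ) = j + x := by
    have hget := getElem_directSum_length ((word σ).take j) r x
    simpa only [← heq, hlen, getElem_word] using hget
  obtain rfl : r.length = x := by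
    have := forall_le_apply_iff.1 h.1
    rw [List.length_cons] at hn
    omega
  exact ⟨_, ⟨hprefix, List.ne_nil_of_length_pos (hj.trans_eq hlen.symm)⟩, _, ⟨hl', r, rfl⟩,
    heq.symm⟩

theorem exists_splitsAtMax_of_word_mem_maxSplitWords {σ : Equiv.Perm (Fin n)}
    (h : word σ ∈ maxSplitWords) : ∃ j : Fin n, 0 < (j : ℕ) ∧ SplitsAtMax σ j := by
  obtain ⟨l, ⟨hl, hnil⟩, _, ⟨-, r, rfl⟩, heq⟩ := h
  have hn : n = l.length + (r.length + 1) := by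
    rw [← length_word σ, ← heq, length_directSum, consMax, List.length_cons]
  have hmax : (σ ⟨l.length, by omega⟩ : ℕ) = l.length + r.length := by
    have hget := getElem_directSum_length l r r.length
    simpa only [← consMax.eq_def, heq, getElem_word] using hget
  refine ⟨⟨l.length, by omega⟩, List.length_pos_iff.2 hnil, forall_le_apply_iff.2 (by omega),
    fun k => ?_⟩
  have hlt := getElem_directSum_lt_iff (l' := consMax r) (k := k)
    (fun _ => lt_length_of_mem_permWords hl) (by rw [heq, length_word]; exact k.isLt)
  rw [Fin.lt_def, Fin.lt_def]
  simpa only [heq, getElem_word] using hlt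

open Classical in
theorem occP_eq_ite (σ : Equiv.Perm (Fin n)) :
    occP σ = if word σ ∈ maxSplitWords then 1 else 0 := by
  split_ifs with h
  · obtain ⟨j, hj, hsplit⟩ := exists_splitsAtMax_of_word_mem_maxSplitWords h
    let i := σ.symm ⟨j - 1, by omega⟩
    have hi : (σ i : ℕ) + 1 = j := by
      rw [σ.apply_symm_apply]
      exact Nat.sub_add_cancel hj
    refine Nat.card_eq_one_iff_exists.2 ⟨⟨(i, j), OccP.of_splitsAtMax hsplit hi⟩, ?_⟩
    rintro ⟨⟨i', j'⟩, h'⟩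
    obtain ⟨hsplit', hi'⟩ := h'.splitsAtMax
    obtain rfl : j' = j := hsplit'.eq hsplit
    obtain rfl : i' = i := σ.injective (Fin.ext (by simp only at hi'; omega))
    rfl
  · refine Nat.card_eq_zero.2 (.inl ⟨fun ⟨⟨i, j⟩, hocc⟩ => h ?_⟩)
    obtain ⟨hsplit, hi⟩ := hocc.splitsAtMax
    exact hsplit.word_mem_maxSplitWords (by omega)

end Permutations

theorem kingAu_eq_genFun : kingAu = genFun (Polynomial ℚ) List.length kings := by
  ext1 n
  rw [coeff_genFun_length _ kings_subset_permWords, kingAu, PowerSeries.coeff_mk, kingCount]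
  simp only [word_mem_kings]

theorem Etu_eq_sub :
    Etu = kingAu - (1 - U) * genFun (Polynomial ℚ) List.length (kings ∩ maxSplitWords) := by
  classical
  ext1 n
  have hU : (1 - U : PowerSeries (Polynomial ℚ)) = PowerSeries.C (1 - Polynomial.X) := by
    simp [U]
  rw [hU, map_sub, PowerSeries.coeff_C_mul,
    coeff_genFun_length _ (Set.inter_subset_left.trans kings_subset_permWords),
    kingAu, PowerSeries.coeff_mk, kingCount, Etu, PowerSeries.coeff_mk]
  simp only [Nat.card_eq_fintype_card, Fintype.card_subtype, Finset.card_filter, Nat.cast_sum,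
    Finset.mul_sum, ← Finset.sum_sub_distrib, Set.mem_inter_iff, word_mem_kings, occP_eq_ite]
  refine Finset.sum_congr rfl fun σ _ => ?_
  by_cases hking : IsKing σ <;> by_cases hsplit : word σ ∈ maxSplitWords <;> simp [hking, hsplit]

theorem statement_9 :
    (1 + T) * Etu
      = ((1 + T) * (1 + T - U * T) - T * (1 - U) * kingAu) * kingAu := by
  have hnil := genFun_kings_eq_add_one (Polynomial ℚ)
  have hstart := X_mul_genFun_kings (Polynomial ℚ)
  have hsplit := genFun_kings_diff_nil_mul_genFun_consMax (Polynomial ℚ)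
  rw [← kingAu_eq_genFun] at hnil hstart
  rw [Etu_eq_sub, T]
  set B := genFun (Polynomial ℚ) List.length (kings ∩ Set.range consMax)
  linear_combination (1 - U) * (1 + PowerSeries.X) * (hsplit + B * hnil) +
    (1 - U) * (kingAu - 1 - PowerSeries.X) * hstart
end
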